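/- Let q = p^m ≡ 5 (mod 8) be a prime power with primitive element α of F_q, and let q = s² + t² be the Katre–Rajwade-normalized representation. For i ∈ F_q^* set D_i = {i, 2i} and let D = {D_i : i ∈ C_0^4}. Then: (i) if 2 ∈ C_1^4, D is a (q,(q−1)/4,2,(q−5)/4)-EDF when t = −2, and a (q,(q−1)/4,2;(q−9)/4,(q−1)/4)-EPDF relative to C_0^2 when t = 2; (ii) if 2 ∈ C_3^4, D is a (q,(q−1)/4,2,(q−5)/4)-EDF when t = 2, and a (q,(q−1)/4,2;(q−9)/4,(q−1)/4)-EPDF relative to C_0^2 when t = −2. In all cases D is a (q,(q−1)/4,2;1,0)-DPDF relative to C_0^2 (that is, Σ_{i∈C_0^4} Δ(D_i) = C_0^2 as multisets). -/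

import Mathlib

open Finset

section Defs

variable {G : Type*} [AddCommGroup G] [Fintype G] [DecidableEq G]

/-- The multiset `Δ(D)` of internal differences `x - y` (for `x ≠ y` in `D`). -/
def intDiff (D : Finset G) : Multiset G :=
  ((D ×ˢ D).filter (fun p => p.1 ≠ p.2)).val.map (fun p => p.1 - p.2)

/-- The multiset `Δ(D, E)` of external differences `x - y` for `x ∈ D`, `y ∈ E`. -/
def extDiff (D E : Finset G) : Multiset G :=
  (D ×ˢ E).val.map (fun p => p.1 - p.2)

/-- The finset `G^*` of nonzero elements of `G`. -/
def Gstar (G : Type*) [AddCommGroup G] [Fintype G] [DecidableEq G] : Finset G :=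
  Finset.univ.erase 0

/-- `A` is a `(v, k, lam, mu)` partial difference set in `G`:
`Δ(A) = lam • A^* + mu • (G^* \ A)`. -/
def IsPDS (A : Finset G) (v k lam mu : ℕ) : Prop :=
  Fintype.card G = v ∧ A.card = k ∧
    intDiff A = lam • (A.erase 0).val + mu • (Gstar G \ A).val

/-- `D` is a `(v, k, lam, mu)` skew partial difference set corresponding to the
`(v, k, lam, mu)`-PDS `A`: `Δ(D) = lam • A^* + mu • (G^* \ A)`. -/
def IsSkewPDS (D A : Finset G) (v k lam mu : ℕ) : Prop :=
  IsPDS A v k lam mu ∧ D.card = k ∧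
    intDiff D = lam • (A.erase 0).val + mu • (Gstar G \ A).val

/-- `D` is an `(n, m, k₁, …, k_m; lam, mu)` disjoint partial difference family relative
to `T`: the `D i` are pairwise disjoint subsets of `G^*` of sizes `k i`, and
`∑ i, Δ(D i) = lam • T + mu • (G^* \ T)`. -/
def IsDPDF {ι : Type*} [Fintype ι] (D : ι → Finset G) (n m : ℕ) (k : ι → ℕ)
    (T : Finset G) (lam mu : ℕ) : Prop :=
  Fintype.card G = n ∧ Fintype.card ι = m ∧
    (∀ i, (0 : G) ∉ D i) ∧ (∀ i, (D i).card = k i) ∧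
    (Pairwise (fun i j => Disjoint (D i) (D j))) ∧
    ∑ i, intDiff (D i) = lam • T.val + mu • (Gstar G \ T).val

/-- `D` is an `(n, m, k₁, …, k_m; lam, mu)` external partial difference family relative
to `T`: the `D i` are pairwise disjoint subsets of `G^*` of sizes `k i`, and
`∑_{i ≠ j}, Δ(D i, D j) = lam • T + mu • (G^* \ T)`. -/
def IsEPDF {ι : Type*} [Fintype ι] [DecidableEq ι] (D : ι → Finset G) (n m : ℕ)
    (k : ι → ℕ) (T : Finset G) (lam mu : ℕ) : Prop :=
  Fintype.card G = n ∧ Fintype.card ι = m ∧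
    (∀ i, (0 : G) ∉ D i) ∧ (∀ i, (D i).card = k i) ∧
    (Pairwise (fun i j => Disjoint (D i) (D j))) ∧
    ∑ i, ∑ j ∈ Finset.univ.erase i, extDiff (D i) (D j)
      = lam • T.val + mu • (Gstar G \ T).val

/-- `D` is an `(n, m, k₁, …, k_m, lam)` disjoint difference family:
`∑ i, Δ(D i) = lam • G^*`. -/
def IsDDF {ι : Type*} [Fintype ι] (D : ι → Finset G) (n m : ℕ) (k : ι → ℕ)
    (lam : ℕ) : Prop :=
  Fintype.card G = n ∧ Fintype.card ι = m ∧
    (∀ i, (0 : G) ∉ D i) ∧ (∀ i, (D i).card = k i) ∧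
    (Pairwise (fun i j => Disjoint (D i) (D j))) ∧
    ∑ i, intDiff (D i) = lam • (Gstar G).val

/-- `D` is an `(n, m, k₁, …, k_m, lam)` external difference family:
`∑_{i ≠ j}, Δ(D i, D j) = lam • G^*`. -/
def IsEDF {ι : Type*} [Fintype ι] [DecidableEq ι] (D : ι → Finset G) (n m : ℕ)
    (k : ι → ℕ) (lam : ℕ) : Prop :=
  Fintype.card G = n ∧ Fintype.card ι = m ∧
    (∀ i, (0 : G) ∉ D i) ∧ (∀ i, (D i).card = k i) ∧
    (Pairwise (fun i j => Disjoint (D i) (D j))) ∧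
    ∑ i, ∑ j ∈ Finset.univ.erase i, extDiff (D i) (D j) = lam • (Gstar G).val

end Defs

section Cyclotomy

variable {F : Type*} [Field F] [Fintype F] [DecidableEq F]

/-- The cyclotomic class `C_i^e = α^i ⟨α^e⟩` of order `e` in the finite field `F`,
with respect to the primitive element `α`.  (Since `α` has multiplicative order at most
`|F| - 1`, letting `j` range over `0, …, |F| - 1` captures the whole class.) -/
def cycClass (α : F) (e i : ℕ) : Finset F :=
  (Finset.range (Fintype.card F)).image (fun j => α ^ (e * j + i))

/-- `α` is a primitive element of the finite field `F`: every nonzero element of `F`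
is a power of `α`. -/
def IsPrimitiveElt (α : F) : Prop :=
  ∀ x : F, x ≠ 0 → ∃ n : ℕ, α ^ n = x

end Cyclotomy

/-- The family `{D_i : i ∈ C_0^4}` where `D_i = {i, 2i}`, indexed by the elements of
`C_0^4`. -/
def pairFam {F : Type*} [Field F] [Fintype F] [DecidableEq F] (α : F) :
    {x : F // x ∈ cycClass α 4 0} → Finset F :=
  fun i => {(i : F), 2 * (i : F)}

/-!
Write `U = ⋃ D_i`. The external differences of the family are the differences inside `U` minus
those inside the `D_i`; the latter are `±i` for `i ∈ C_0^4` and fill `C_0^2`, as `-1 ∈ C_2^4`. Let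
`χ` be the quartic character with `χ 2 = i`, so that `U` consists of the `x` with `χ x ∈ {1, i}`.
Expanding the indicator function of `U` in terms of `χ` and its conjugate shows that the number of
`y` with `y, y + z ∈ U` is `(q - 3 - Im (χ(z)² J(χ, χ))) / 4`.

If `χ α = i` then `J(χ, χ) = -s + t i`. Indeed, let `φ : ℤ[i] → F` be the ring homomorphism with
`φ (χ x) = x ^ (3 (q - 1) / 4)`. Then `φ (J(χ, χ))` is up to sign a binomial coefficient prime to
`p`, while `φ (s - t i) = 2 s ≠ 0` by the normalization of `t`. As both numbers have norm `p ^ m`,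
they are associated. Pairing `x` with `1 - x` gives `J(χ, χ) ≡ 1` modulo `2 + 2 i`, which singles
out the unit `-1`. If `χ α = -i`, the sign of `t` changes.
-/

section Differences

variable {G : Type*} [AddCommGroup G] [DecidableEq G]

lemma intDiff_eq_sum (D : Finset G) :
    intDiff D = ∑ x ∈ D, ∑ y ∈ D, if x = y then 0 else {x - y} := by
  rw [← sum_product', ← Multiset.sum_map_singleton (intDiff D), intDiff, Multiset.map_map]
  simp_rw [← ite_not (_ = _)]
  rw [← sum_filter]
  rfl

lemma intDiff_pair {x y : G} (hxy : x ≠ y) : intDiff {x, y} = {x - y} + {y - x} := by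
  rw [intDiff_eq_sum, sum_pair hxy, sum_pair hxy, sum_pair hxy, if_pos rfl, if_pos rfl,
    if_neg hxy, if_neg hxy.symm, zero_add, add_zero]

lemma extDiff_eq_sum_of_disjoint {D E : Finset G} (h : Disjoint D E) :
    extDiff D E = ∑ x ∈ D, ∑ y ∈ E, if x = y then 0 else {x - y} := by
  rw [← sum_product', ← Multiset.sum_map_singleton (extDiff D E), extDiff, Multiset.map_map]
  refine sum_congr rfl fun a ha ↦ (if_neg ?_).symm
  rw [mem_product] at ha
  exact disjoint_iff_ne.1 h _ ha.1 _ ha.2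

lemma sum_extDiff_add_sum_intDiff {ι : Type*} [Fintype ι] [DecidableEq ι] {D : ι → Finset G}
    (hD : Pairwise fun i j ↦ Disjoint (D i) (D j)) :
    ∑ i, ∑ j ∈ univ.erase i, extDiff (D i) (D j) + ∑ i, intDiff (D i) =
      intDiff (univ.biUnion D) := by
  have hD' : (↑(univ : Finset ι) : Set ι).PairwiseDisjoint D := fun i _ j _ hij ↦ hD hij
  rw [intDiff_eq_sum, sum_biUnion hD', ← sum_add_distrib]
  refine sum_congr rfl fun i _ ↦ ?_
  simp_rw [sum_biUnion hD']
  rw [sum_comm (s := D i), ← sum_erase_add _ _ (mem_univ i), intDiff_eq_sum]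
  congr 1
  exact sum_congr rfl fun j hj ↦ extDiff_eq_sum_of_disjoint (hD (ne_of_mem_erase hj).symm)

lemma zero_notMem_intDiff (D : Finset G) : (0 : G) ∉ intDiff D := by
  simp [intDiff, sub_eq_zero]

lemma count_intDiff (D : Finset G) {z : G} (hz : z ≠ 0) :
    (intDiff D).count z = #{y ∈ D | y + z ∈ D} := by
  rw [intDiff, Multiset.count_map, ← filter_val, card_val, filter_filter]
  refine card_bij' (fun a _ ↦ a.2) (fun y _ ↦ (y + z, y)) ?_ ?_ ?_ ?_
  · rintro ⟨x, y⟩ h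
    simp only [mem_filter, mem_product] at h ⊢
    obtain ⟨⟨hx, hy⟩, -, rfl⟩ := h
    simpa [hy] using hx
  · intro y h
    simp only [mem_filter, mem_product] at h ⊢
    simp [h, hz]
  · rintro ⟨x, y⟩ h
    simp only [mem_filter] at h
    simp [h.2.2]
  · simp

variable [Fintype G]

lemma eq_nsmul_val_add_nsmul_val {M : Multiset G} {T : Finset G} {lam mu : ℕ}
    (h0 : 0 ∉ M) (hlam : ∀ z ∈ T, M.count z = lam) (hmu : ∀ z ≠ 0, z ∉ T → M.count z = mu) :
    M = lam • T.val + mu • (Gstar G \ T).val := by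
  ext z
  rw [Multiset.count_add, Multiset.count_nsmul, Multiset.count_nsmul,
    Multiset.count_eq_of_nodup T.nodup, Multiset.count_eq_of_nodup (Gstar G \ T).nodup]
  simp only [mem_val, mem_sdiff, Gstar, mem_erase, mem_univ, and_true]
  by_cases hzT : z ∈ T
  · simp [hzT, hlam z hzT]
  · rcases eq_or_ne z 0 with rfl | hz
    · simp [hzT, h0]
    · simp [hzT, hz, hmu z hz hzT]

lemma IsEPDF.isEDF {ι : Type*} [Fintype ι] [DecidableEq ι] {D : ι → Finset G}
    {n m lam : ℕ} {k : ι → ℕ} {T : Finset G} (h : IsEPDF D n m k T lam lam)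
    (hT : T ⊆ Gstar G) : IsEDF D n m k lam := by
  obtain ⟨hn, hm, h0, hk, hdisj, hsum⟩ := h
  refine ⟨hn, hm, h0, hk, hdisj, ?_⟩
  rw [hsum, ← nsmul_add, ← union_sdiff_of_subset hT, ← disjUnion_eq_union _ _ disjoint_sdiff]
  simp [disjUnion]

end Differences

section CyclotomicClasses

lemma one_ne_neg_one_of_isPrimitiveRoot_four {R : Type*} [CommRing R]
    [IsDomain R] {ζ : R} (hζ : IsPrimitiveRoot ζ 4) : (1 : R) ≠ -1 := by
  have hζ2 : IsPrimitiveRoot (ζ ^ 2) 2 := hζ.pow (by lia) rfl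
  exact hζ2.eq_neg_one_of_two_right ▸ (hζ2.ne_one one_lt_two).symm

namespace IsPrimitiveElt

variable {F : Type*} [Field F] {α : F} {R : Type*} [CommRing R] {χ : MulChar F R}

lemma forall_mem_zpowers {a : Fˣ} (ha : IsPrimitiveElt (a : F)) (x : Fˣ) :
    x ∈ Subgroup.zpowers a := by
  obtain ⟨n, hn⟩ := ha x x.ne_zero
  exact ⟨n, Units.ext (by simpa using hn)⟩

lemma map_mulChar_apply (hα : IsPrimitiveElt α)
    (φ : R →+* F) {n : ℕ} (hn : n ≠ 0) (hφ : φ (χ α) = α ^ n) (x : F) : φ (χ x) = x ^ n := by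
  rcases eq_or_ne x 0 with rfl | hx
  · rw [MulChar.map_zero, map_zero, zero_pow hn]
  · obtain ⟨k, rfl⟩ := hα x hx
    rw [map_pow, map_pow, hφ, pow_right_comm]

lemma ne_zero_of_isPrimitiveRoot [Nontrivial R] {e : ℕ} (he : e ≠ 0)
    (hχ : IsPrimitiveRoot (χ α) e) : α ≠ 0 := by
  rintro rfl
  exact not_isUnit_zero (χ.map_zero ▸ hχ.isUnit he)

lemma apply_sq_eq_one_or_eq_neg_one [IsDomain R] (hα : IsPrimitiveElt α)
    (hχ : IsPrimitiveRoot (χ α) 4) {x : F} (hx : x ≠ 0) : χ x ^ 2 = 1 ∨ χ x ^ 2 = -1 := by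
  have hsq : χ α ^ 2 = -1 := IsPrimitiveRoot.eq_neg_one_of_two_right (hχ.pow (by lia) rfl)
  obtain ⟨n, rfl⟩ := hα x hx
  rw [map_pow, pow_right_comm, hsq]
  exact neg_one_pow_eq_or R n

lemma apply_sq_eq_neg_one [IsDomain R] (hα : IsPrimitiveElt α)
    (hχ : IsPrimitiveRoot (χ α) 4) {x : F} (hx : ¬IsSquare x) : χ x ^ 2 = -1 := by
  have hsq : χ α ^ 2 = -1 := IsPrimitiveRoot.eq_neg_one_of_two_right (hχ.pow (by lia) rfl)
  obtain ⟨n, rfl⟩ := hα x (by rintro rfl; exact hx .zero)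
  have hodd : Odd n := by
    contrapose! hx
    exact (Nat.not_odd_iff_even.1 hx).isSquare_pow α
  rw [map_pow, pow_right_comm, hsq, hodd.neg_one_pow]

variable [Fintype F]

lemma ne_zero (hα : IsPrimitiveElt α) (hF : 2 < Fintype.card F) : α ≠ 0 := by
  classical
  rintro rfl
  refine hF.not_ge ((card_le_card fun x _ ↦ ?_).trans (card_le_two (a := (0 : F)) (b := 1)))
  rw [mem_insert, mem_singleton, or_iff_not_imp_left]
  intro hx
  obtain ⟨n, rfl⟩ := hα x hx
  rcases n with _ | n
  · exact pow_zero 0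
  · exact absurd (zero_pow n.succ_ne_zero) hx

lemma orderOf_eq (hα : IsPrimitiveElt α) (hα0 : α ≠ 0) : orderOf α = Fintype.card F - 1 := by
  classical
  lift α to Fˣ using hα0.isUnit
  rw [orderOf_units, orderOf_eq_card_of_forall_mem_zpowers hα.forall_mem_zpowers,
    Nat.card_eq_fintype_card, Fintype.card_units]

lemma exists_mulChar_apply_eq (hα : IsPrimitiveElt α) (hα0 : α ≠ 0)
    {ζ : R} (hζ : ζ ^ (Fintype.card F - 1) = 1) : ∃ χ : MulChar F R, χ α = ζ := by
  classical
  lift α to Fˣ using hα0.isUnit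
  lift ζ to Rˣ using
    IsUnit.of_pow_eq_one hζ (Nat.sub_ne_zero_of_lt (Fintype.one_lt_card (α := F)))
  have hζ' : ζ ∈ rootsOfUnity (Fintype.card Fˣ) R := by
    rw [mem_rootsOfUnity, Fintype.card_units]
    exact Units.ext (by simpa using hζ)
  exact ⟨MulChar.ofRootOfUnity (by simpa using hζ') hα.forall_mem_zpowers,
    MulChar.ofRootOfUnity_spec _ _⟩

lemma pow_card_sub_one_div_two (hα : IsPrimitiveElt α) (hα0 : α ≠ 0)
    (hF : Fintype.card F % 2 = 1) : α ^ ((Fintype.card F - 1) / 2) = -1 := by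
  have hcard := Fintype.one_lt_card (α := F)
  have hprim := hα.orderOf_eq hα0 ▸ IsPrimitiveRoot.orderOf α
  refine IsPrimitiveRoot.eq_neg_one_of_two_right (hprim.pow (by lia) ?_)
  lia

lemma pow_card_sub_one_div_four_mul_self (hα : IsPrimitiveElt α) (hα0 : α ≠ 0)
    (hF : Fintype.card F % 4 = 1) :
    α ^ ((Fintype.card F - 1) / 4) * α ^ ((Fintype.card F - 1) / 4) = -1 := by
  rw [← pow_add, ← hα.pow_card_sub_one_div_two hα0 (by lia)]
  congr 1
  lia

lemma apply_neg_one_eq [IsDomain R] (hα : IsPrimitiveElt α) (hχ : IsPrimitiveRoot (χ α) 4)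
    (hF : Fintype.card F % 8 = 5) : χ (-1) = -1 := by
  have hsq : χ α ^ 2 = -1 := IsPrimitiveRoot.eq_neg_one_of_two_right (hχ.pow (by lia) rfl)
  have hodd : Odd ((Fintype.card F - 1) / 4) := Nat.odd_iff.2 (by lia)
  rw [← hα.pow_card_sub_one_div_two (ne_zero_of_isPrimitiveRoot four_ne_zero hχ) (by lia), map_pow,
    show (Fintype.card F - 1) / 2 = 2 * ((Fintype.card F - 1) / 4) by lia, pow_mul, hsq,
    hodd.neg_one_pow]

lemma apply_two_sq [IsDomain R] (hα : IsPrimitiveElt α) (hχ : IsPrimitiveRoot (χ α) 4)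
    (hF : Fintype.card F % 8 = 5) : χ 2 ^ 2 = -1 :=
  hα.apply_sq_eq_neg_one hχ fun h ↦ (FiniteField.isSquare_two_iff.1 h).2 hF

end IsPrimitiveElt

variable {F : Type*} [Field F] [Fintype F] [DecidableEq F] {α : F} {e : ℕ}

lemma cycClass_eq_image_range (hα0 : α ≠ 0) (he : e ∣ Fintype.card F - 1) (i : ℕ) :
    cycClass α e i =
      (range ((Fintype.card F - 1) / e)).image fun j ↦ α ^ (e * j + i) := by
  have hcard := Fintype.one_lt_card (α := F)
  obtain ⟨f, hf⟩ := he
  have he0 : 0 < e := Nat.pos_of_ne_zero (by rintro rfl; lia)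
  have hf0 : 0 < f := Nat.pos_of_ne_zero (by rintro rfl; lia)
  rw [hf, Nat.mul_div_cancel_left f he0]
  refine (image_subset_iff.2 fun j _ ↦ mem_image.2 ⟨j % f, ?_, ?_⟩).antisymm (image_subset_image ?_)
  · exact mem_range.2 (Nat.mod_lt j hf0)
  · have hone : α ^ (e * f) = 1 := hf ▸ FiniteField.pow_card_sub_one_eq_one α hα0
    conv_rhs => rw [← Nat.mod_add_div j f, mul_add, ← mul_assoc, add_right_comm, pow_add, pow_mul,
      hone, one_pow, mul_one]
  · rw [range_subset_range]
    nlinarith [Nat.sub_add_cancel hcard.le]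

lemma card_cycClass (hα : IsPrimitiveElt α) (hα0 : α ≠ 0) (he : e ∣ Fintype.card F - 1)
    (i : ℕ) : #(cycClass α e i) = (Fintype.card F - 1) / e := by
  have hcard := Fintype.one_lt_card (α := F)
  have he0 : 0 < e := Nat.pos_of_dvd_of_pos he (by lia)
  rw [cycClass_eq_image_range hα0 he, card_image_of_injOn, card_range]
  intro j hj k hk hjk
  simp only [pow_add] at hjk
  have hlt : ∀ l ∈ (range ((Fintype.card F - 1) / e) : Set ℕ), e * l ∈ Set.Iio (orderOf α) := by
    intro l hl
    rw [Set.mem_Iio, hα.orderOf_eq hα0, ← Nat.lt_div_iff_mul_lt' he]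
    simpa using hl
  exact Nat.eq_of_mul_eq_mul_left he0 <|
    pow_injOn_Iio_orderOf (hlt j hj) (hlt k hk) (mul_right_cancel₀ (pow_ne_zero i hα0) hjk)

lemma pow_mem_cycClass_iff (hα : IsPrimitiveElt α) (hα0 : α ≠ 0)
    (he : e ∣ Fintype.card F - 1) {i n : ℕ} : α ^ n ∈ cycClass α e i ↔ n ≡ i [MOD e] := by
  have hcard := Fintype.one_lt_card (α := F)
  have hpow {j k : ℕ} : α ^ j = α ^ k ↔ j ≡ k [MOD Fintype.card F - 1] := by
    rw [(hα0.isUnit.isOfFinOrder).pow_eq_pow_iff_modEq, hα.orderOf_eq hα0]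
  constructor
  · intro h
    obtain ⟨j, -, hj⟩ := mem_image.1 h
    exact ((hpow.1 hj).of_dvd he).symm.trans (by simp [Nat.ModEq])
  · intro h
    have hle : i ≤ n + i * (Fintype.card F - 1) := by nlinarith [Nat.sub_add_cancel hcard.le]
    have hmod : i ≡ n + i * (Fintype.card F - 1) [MOD e] := by
      simpa using h.symm.add (Nat.modEq_zero_iff_dvd.2 (he.mul_left i)).symm
    obtain ⟨k, hk⟩ := (Nat.modEq_iff_dvd' hle).1 hmod
    refine mem_image.2 ⟨k % (Fintype.card F - 1), mem_range.2 ?_, hpow.2 ?_⟩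
    · exact (Nat.mod_lt k (by lia)).trans (by lia)
    · calc e * (k % (Fintype.card F - 1)) + i
          ≡ e * k + i [MOD Fintype.card F - 1] := ((Nat.mod_modEq k _).mul_left e).add_right i
        _ = n + i * (Fintype.card F - 1) := by lia
        _ ≡ n [MOD Fintype.card F - 1] := by simp [Nat.ModEq]

lemma mem_cycClass_iff_mulChar_apply {R : Type*} [CommRing R] [Nontrivial R]
    (hα : IsPrimitiveElt α) {χ : MulChar F R} (he : e ≠ 0) (hχ : IsPrimitiveRoot (χ α) e)
    {i : ℕ} {x : F} : x ∈ cycClass α e i ↔ χ x = χ α ^ i := by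
  have hα0 := IsPrimitiveElt.ne_zero_of_isPrimitiveRoot he hχ
  have hdvd : e ∣ Fintype.card F - 1 := hχ.dvd_of_pow_eq_one _ <| by
    rw [← map_pow, FiniteField.pow_card_sub_one_eq_one α hα0, map_one]
  rcases eq_or_ne x 0 with rfl | hx
  · have : χ α ^ i ≠ 0 := ((hχ.isUnit he).pow i).ne_zero
    simp [cycClass, hα0, χ.map_zero, this.symm]
  · obtain ⟨n, rfl⟩ := hα x hx
    have hfin : IsOfFinOrder (χ α) :=
      isOfFinOrder_iff_pow_eq_one.2 ⟨e, Nat.pos_of_ne_zero he, hχ.pow_eq_one⟩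
    rw [pow_mem_cycClass_iff hα hα0 hdvd, map_pow, hfin.pow_eq_pow_iff_modEq, ← hχ.eq_orderOf]

end CyclotomicClasses

local notation "ℤ[i]" => GaussianInt
local notation "𝐢" => (Zsqrtd.sqrtd : GaussianInt)

section GaussianIntegers

lemma gaussianInt_isPrimitiveRoot_sqrtd : IsPrimitiveRoot 𝐢 4 :=
  .mk_of_lt _ four_pos (by decide) fun l h0 h4 ↦ by interval_cases l <;> decide

lemma gaussianInt_isUnit_iff {u : ℤ[i]} : IsUnit u ↔ u = 1 ∨ u = 𝐢 ∨ u = -1 ∨ u = -𝐢 := by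
  constructor
  · intro hu
    obtain ⟨a, b⟩ := u
    have hnorm : a * a + b * b = 1 := by
      simpa [Zsqrtd.norm_def] using (Zsqrtd.norm_eq_one_iff' (by decide) _).2 hu
    have ha : -1 ≤ a ∧ a ≤ 1 := by constructor <;> nlinarith
    have hb : -1 ≤ b ∧ b ≤ 1 := by constructor <;> nlinarith
    obtain ⟨⟨_, _⟩, _, _⟩ := ha, hb
    interval_cases a <;> interval_cases b <;> first | lia | decide
  · rintro (rfl | rfl | rfl | rfl) <;> rw [← Zsqrtd.norm_eq_one_iff' (by decide)] <;> decide

lemma gaussianInt_one_add_sqrtd_dvd_sub_one {u : ℤ[i]} (hu : IsUnit u) : 1 + 𝐢 ∣ u - 1 := by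
  rcases gaussianInt_isUnit_iff.1 hu with rfl | rfl | rfl | rfl
  exacts [⟨0, by decide⟩, ⟨𝐢, by decide⟩, ⟨-1 + 𝐢, by decide⟩, ⟨-1, by decide⟩]

lemma gaussianInt_even_im_and_four_dvd_re_add_im {z : ℤ[i]} (hz : 2 * (1 + 𝐢) ∣ z) :
    2 ∣ z.im ∧ 4 ∣ z.re + z.im := by
  obtain ⟨w, rfl⟩ := hz
  have h2 : 2 * (1 + 𝐢) = ⟨2, 2⟩ := by decide
  rw [h2, Zsqrtd.im_mul, Zsqrtd.re_mul]
  exact ⟨⟨w.re + w.im, by ring⟩, ⟨w.re, by ring⟩⟩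

lemma gaussianInt_isUnit_eq_neg_one {u : ℤ[i]} (hu : IsUnit u) {s t : ℤ} (hs : s % 4 = 1)
    (ht : t % 4 = 2) (h : 2 * (1 + 𝐢) ∣ u * star ⟨s, t⟩ - 1) : u = -1 := by
  obtain ⟨heven, hmod⟩ := gaussianInt_even_im_and_four_dvd_re_add_im h
  simp only [Zsqrtd.star_mk, Zsqrtd.im_sub, Zsqrtd.re_sub, Zsqrtd.im_mul, Zsqrtd.re_mul,
    Zsqrtd.re_one, Zsqrtd.im_one] at heven hmod
  rcases gaussianInt_isUnit_iff.1 hu with rfl | rfl | rfl | rfl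
  · rw [Zsqrtd.re_one, Zsqrtd.im_one] at hmod
    lia
  · rw [Zsqrtd.re_sqrtd, Zsqrtd.im_sqrtd] at heven
    lia
  · rfl
  · rw [Zsqrtd.re_neg, Zsqrtd.im_neg, Zsqrtd.re_sqrtd, Zsqrtd.im_sqrtd] at heven
    lia

lemma gaussianInt_re_sum {ι : Type*} (s : Finset ι) (f : ι → ℤ[i]) :
    (∑ x ∈ s, f x).re = ∑ x ∈ s, (f x).re :=
  map_sum (⟨⟨Zsqrtd.re, Zsqrtd.re_zero⟩, Zsqrtd.re_add⟩ : ℤ[i] →+ ℤ) f s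

lemma gaussianInt_im_sum {ι : Type*} (s : Finset ι) (f : ι → ℤ[i]) :
    (∑ x ∈ s, f x).im = ∑ x ∈ s, (f x).im :=
  map_sum (⟨⟨Zsqrtd.im, Zsqrtd.im_zero⟩, Zsqrtd.im_add⟩ : ℤ[i] →+ ℤ) f s

lemma gaussianInt_exists_isUnit_eq_mul_star {z w : ℤ[i]} (hw : w ≠ 0) (hnorm : z.norm = w.norm)
    (hdvd : w.norm ∣ (z * w).im) : ∃ u, IsUnit u ∧ z = u * star w := by
  have hsq : (z * w).re ^ 2 = w.norm ^ 2 - (z * w).im ^ 2 := by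
    have := Zsqrtd.norm_mul z w
    rw [hnorm, Zsqrtd.norm_def (z * w)] at this
    linear_combination this
  have hre : w.norm ∣ (z * w).re :=
    (Int.pow_dvd_pow_iff two_ne_zero).1 (hsq ▸ dvd_sub dvd_rfl (pow_dvd_pow_of_dvd hdvd 2))
  obtain ⟨u, hu⟩ := (Zsqrtd.intCast_dvd _ _).2 ⟨hre, hdvd⟩
  have hz : z = u * star w := by
    apply mul_right_cancel₀ hw
    rw [hu, Zsqrtd.norm_eq_mul_conj]
    ring
  refine ⟨u, (Zsqrtd.norm_eq_one_iff' (by decide) u).1 ?_, hz⟩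
  apply mul_right_cancel₀ (mt (Zsqrtd.norm_eq_zero_iff (by decide) w).1 hw)
  rw [one_mul, ← Zsqrtd.norm_conj w, ← Zsqrtd.norm_mul, ← hz, hnorm, Zsqrtd.norm_conj]

end GaussianIntegers

section GaussianCharacters

lemma two_mul_dvd_sum_sub_of_involution {ι R : Type*} [CommRing R] {s : Finset ι} {σ : ι → ι}
    (hσs : ∀ x ∈ s, σ x ∈ s) (hσσ : ∀ x ∈ s, σ (σ x) = x) {c : ι} (hcs : c ∈ s)
    (hc : ∀ x ∈ s, σ x = x ↔ x = c) {g : ι → R} (hgσ : ∀ x ∈ s, g (σ x) = g x) {d : R}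
    (hd : ∀ x ∈ s, d ∣ g x) : 2 * d ∣ ∑ x ∈ s, g x - g c := by
  classical
  rw [← sum_erase_add s g hcs, add_sub_cancel_right, ← Ideal.mem_span_singleton,
    ← Ideal.Quotient.eq_zero_iff_mem, map_sum]
  refine sum_involution (fun x _ ↦ σ x) (fun x hx ↦ ?_) (fun x hx _ ↦ ?_) (fun x hx ↦ ?_)
    fun x hx ↦ hσσ x (mem_of_mem_erase hx)
  · have hxs := mem_of_mem_erase hx
    rw [hgσ x hxs, ← map_add, ← two_mul, Ideal.Quotient.eq_zero_iff_mem, Ideal.mem_span_singleton]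
    exact mul_dvd_mul_left 2 (hd x hxs)
  · rw [Ne, hc x (mem_of_mem_erase hx)]
    exact ne_of_mem_erase hx
  · have hxs := mem_of_mem_erase hx
    refine mem_erase.2 ⟨fun hσx ↦ ne_of_mem_erase hx ?_, hσs x hxs⟩
    rw [← hσσ x hxs, hσx, (hc c hcs).2 rfl]

variable {F : Type*} [Field F]

lemma mulChar_inv_apply_eq_star [Finite F] (χ : MulChar F ℤ[i]) (x : F) : χ⁻¹ x = star (χ x) := by
  apply GaussianInt.toComplex_injective
  rw [GaussianInt.toComplex_star, ← MulChar.ringHomComp_apply, ← MulChar.ringHomComp_inv,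
    ← MulChar.star_apply']
  rfl

lemma isPrimitiveRoot_mulChar_inv_apply [Finite F] {χ : MulChar F ℤ[i]} {x : F} {n : ℕ}
    (hχ : IsPrimitiveRoot (χ x) n) : IsPrimitiveRoot (χ⁻¹ x) n := by
  rw [mulChar_inv_apply_eq_star]
  exact hχ.map_of_injective (f := starRingEnd ℤ[i]) (star_injective (R := ℤ[i]))

variable [Fintype F]

lemma jacobiSum_inv_eq_star (χ φ : MulChar F ℤ[i]) :
    jacobiSum χ⁻¹ φ⁻¹ = star (jacobiSum χ φ) := by
  simp only [jacobiSum, mulChar_inv_apply_eq_star, star_sum, star_mul']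

lemma norm_jacobiSum {χ φ : MulChar F ℤ[i]} (hχ : χ ≠ 1) (hφ : φ ≠ 1) (hχφ : χ * φ ≠ 1) :
    (jacobiSum χ φ).norm = Fintype.card F := by
  have hchar : ringChar ℂ ≠ ringChar F := by
    rw [ringChar.eq_zero]
    exact (CharP.ringChar_ne_zero_of_finite F).symm
  have hne {ψ : MulChar F ℤ[i]} : ψ.ringHomComp GaussianInt.toComplex ≠ 1 ↔ ψ ≠ 1 :=
    MulChar.ringHomComp_ne_one_iff GaussianInt.toComplex_injective
  have h := jacobiSum_mul_jacobiSum_inv hchar (hne.2 hχ) (hne.2 hφ)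
    (by rw [← MulChar.ringHomComp_mul]; exact hne.2 hχφ)
  rw [MulChar.ringHomComp_inv, MulChar.ringHomComp_inv, jacobiSum_ringHomComp,
    jacobiSum_ringHomComp, jacobiSum_inv_eq_star, ← map_mul, ← Zsqrtd.norm_eq_mul_conj] at h
  exact_mod_cast (by simpa using h : (((jacobiSum χ φ).norm : ℤ) : ℂ) = (Fintype.card F : ℤ))

lemma two_mul_one_add_sqrtd_dvd_jacobiSum_self_sub (χ : MulChar F ℤ[i]) (h2 : (2 : F) ≠ 0) :
    2 * (1 + 𝐢) ∣ jacobiSum χ χ - (Fintype.card F - 3 + χ 2⁻¹ ^ 2) := by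
  classical
  have hhalf : 1 - 2⁻¹ = (2⁻¹ : F) := by
    rw [sub_eq_iff_eq_add, ← two_mul, mul_inv_cancel₀ h2]
  have hmem {x : F} : x ∈ univ \ {0, 1} ↔ x ≠ 0 ∧ 1 - x ≠ 0 := by
    simp [sub_ne_zero, eq_comm (a := (1 : F))]
  have hsum : jacobiSum χ χ - (Fintype.card F - 2 : ℤ[i]) =
      ∑ x ∈ univ \ {0, 1}, (χ x * χ (1 - x) - 1) := by
    rw [jacobiSum_eq_sum_sdiff, sum_sub_distrib, sum_const, card_univ_sdiff,
      card_pair zero_ne_one, nsmul_one, Nat.cast_sub Fintype.one_lt_card, Nat.cast_two]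
  have hdvd : 2 * (1 + 𝐢) ∣ jacobiSum χ χ - (Fintype.card F - 2 : ℤ[i]) -
      (χ 2⁻¹ * χ (1 - 2⁻¹) - 1) := by
    rw [hsum]
    refine two_mul_dvd_sum_sub_of_involution (σ := fun x ↦ 1 - x)
      (g := fun x ↦ χ x * χ (1 - x) - 1) (fun x hx ↦ ?_) (fun x _ ↦ sub_sub_cancel 1 x) ?_
      (fun x _ ↦ ?_) (fun x _ ↦ ?_) fun x hx ↦ ?_
    · rw [hmem] at hx ⊢
      simpa using hx.symm
    · simpa [hmem, hhalf] using h2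
    · rw [← mul_eq_one_iff_eq_inv₀ h2]
      constructor <;> intro h <;> linear_combination -h
    · rw [sub_sub_cancel, mul_comm]
    · rw [hmem] at hx
      rw [← map_mul]
      exact gaussianInt_one_add_sqrtd_dvd_sub_one ((mul_ne_zero hx.1 hx.2).isUnit.map χ)
  convert hdvd using 1
  rw [hhalf]
  ring

end GaussianCharacters

section PowerSums

variable {F : Type*} [Field F] [Fintype F]

open Polynomial in
lemma sum_eval_eq_neg_coeff_card_sub_one {P : F[X]}
    (hP : P.natDegree < 2 * (Fintype.card F - 1)) :
    ∑ x, P.eval x = -P.coeff (Fintype.card F - 1) := by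
  have hcard := Fintype.one_lt_card (α := F)
  have hpow : ∀ j ∈ range (2 * (Fintype.card F - 1)),
      ∑ x : F, x ^ j = if j = Fintype.card F - 1 then -1 else 0 := by
    intro j hj
    rw [mem_range] at hj
    rcases lt_trichotomy j (Fintype.card F - 1) with hlt | rfl | hgt
    · rw [if_neg hlt.ne, FiniteField.sum_pow_lt_card_sub_one F j hlt]
    · classical
      rw [if_pos rfl, ← sum_erase_add _ _ (mem_univ 0), zero_pow (by lia), add_zero,
        sum_congr rfl fun x hx ↦ FiniteField.pow_card_sub_one_eq_one x (ne_of_mem_erase hx)]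
      simp [card_erase_of_mem, Nat.cast_sub hcard.le]
    · have hred (x : F) : x ^ j = x ^ (j - (Fintype.card F - 1)) := by
        obtain ⟨k, rfl⟩ := Nat.exists_eq_add_of_lt hgt
        rw [show Fintype.card F - 1 + k + 1 = Fintype.card F + k by lia, pow_add,
          FiniteField.pow_card, ← pow_succ']
        congr 1
        lia
      simp_rw [if_neg hgt.ne', hred]
      exact FiniteField.sum_pow_lt_card_sub_one F _ (by lia)
  calc ∑ x, P.eval x
      = ∑ j ∈ range (2 * (Fintype.card F - 1)), P.coeff j * ∑ x : F, x ^ j := by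
        simp_rw [eval_eq_sum_range' hP, mul_sum]
        exact sum_comm
    _ = -P.coeff (Fintype.card F - 1) := by
        rw [sum_congr rfl fun j hj ↦ by rw [hpow j hj]]
        simp [show Fintype.card F - 1 < 2 * (Fintype.card F - 1) by lia]

open Polynomial in
lemma sum_pow_mul_one_sub_pow {a b : ℕ} (ha : a ≤ Fintype.card F - 1)
    (hb : b < Fintype.card F - 1) :
    ∑ x : F, x ^ a * (1 - x) ^ b =
      (-1) ^ (Fintype.card F - a) * b.choose (Fintype.card F - 1 - a) := by
  have hdeg : (X ^ a * (1 - X : F[X]) ^ b).natDegree < 2 * (Fintype.card F - 1) := by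
    refine lt_of_le_of_lt ?_ (by lia : a + b < _)
    compute_degree
  have hcoeff : ((1 - X : F[X]) ^ b).coeff (Fintype.card F - 1 - a) =
      (-1) ^ (Fintype.card F - 1 - a) * b.choose (Fintype.card F - 1 - a) := by
    have hcomp : (1 - X : F[X]) ^ b = ((1 + X) ^ b : F[X]).comp (C (-1) * X) := by
      simp [sub_eq_add_neg]
    rw [hcomp, comp_C_mul_X_coeff, coeff_one_add_X_pow, mul_comm]
  have h := sum_eval_eq_neg_coeff_card_sub_one hdeg
  rw [coeff_X_pow_mul', if_pos ha, hcoeff] at h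
  rw [show Fintype.card F - a = Fintype.card F - 1 - a + 1 by lia, pow_succ]
  simpa using h

end PowerSums

section Binomials

lemma not_dvd_choose_mul_geom_sum {p n k : ℕ} (hp : p.Prime) (hkn : k ≤ n) (hnp : n < p) (m : ℕ) :
    ¬ p ∣ (n * ∑ i ∈ range m, p ^ i).choose (k * ∑ i ∈ range m, p ^ i) := by
  have := Fact.mk hp
  induction m with
  | zero => simp [hp.one_lt.ne']
  | succ m ih =>
    have hdigit (l : ℕ) : l * ∑ i ∈ range (m + 1), p ^ i =
        l + p * (l * ∑ i ∈ range m, p ^ i) := by rw [geom_sum_succ]; ring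
    have hmod {l : ℕ} (hl : l < p) (c : ℕ) : (l + p * c) % p = l := by
      rw [Nat.add_mul_mod_self_left, Nat.mod_eq_of_lt hl]
    have hdiv {l : ℕ} (hl : l < p) (c : ℕ) : (l + p * c) / p = c := by
      rw [Nat.add_mul_div_left _ _ hp.pos, Nat.div_eq_of_lt hl, zero_add]
    have hkp := hkn.trans_lt hnp
    rw [hdigit, hdigit, Choose.choose_modEq_choose_mod_mul_choose_div_nat.dvd_iff dvd_rfl,
      hmod hnp, hmod hkp, hdiv hnp, hdiv hkp, hp.dvd_mul, not_or]
    refine ⟨fun hdvd ↦ hnp.not_ge (hp.dvd_factorial.1 ?_), ih⟩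
    rw [← Nat.choose_mul_factorial_mul_factorial hkn, mul_assoc]
    exact hdvd.mul_right _

lemma not_dvd_choose_three_mul {p f m : ℕ} (hp : p.Prime) (hp4 : p % 4 = 1)
    (hf : p ^ m = 4 * f + 1) : ¬ p ∣ (3 * f).choose f := by
  obtain ⟨r, rfl⟩ : ∃ r, p = 4 * r + 1 := ⟨p / 4, by lia⟩
  have hfr : f = r * ∑ i ∈ range m, (4 * r + 1) ^ i := by
    linarith [geom_sum_mul_add (4 * r) m]
  rw [hfr, ← mul_assoc]
  exact not_dvd_choose_mul_geom_sum hp (by lia) (by lia) m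

lemma mod_eight_eq_five_of_pow {p m : ℕ} (h : p ^ m % 8 = 5) : p % 8 = 5 := by
  have key : ∀ x y : ZMod 8, y * y ≠ 5 ∧ (y * y * x = 5 → x = 5) := by decide
  have hcast {n : ℕ} : n % 8 = 5 ↔ (n : ZMod 8) = 5 := by
    exact_mod_cast (ZMod.natCast_eq_natCast_iff' n 5 8).symm
  rw [hcast] at h ⊢
  rcases m.even_or_odd' with ⟨k, rfl | rfl⟩ <;> rw [Nat.cast_pow] at h
  · rw [two_mul, pow_add] at h
    exact absurd h (key p _).1
  · rw [pow_succ, two_mul, pow_add] at h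
    exact (key p _).2 h

end Binomials

section QuarticJacobiSum

lemma pow_dvd_mul_add_mul_of_sq_add_sq {p a b s t : ℤ} {m : ℕ} (hp : Prime p)
    (hab : p ^ m = a ^ 2 + b ^ 2) (hst : p ^ m = s ^ 2 + t ^ 2) (hne : ¬ p ∣ b * s - a * t) :
    p ^ m ∣ a * t + b * s := by
  refine (IsCoprime.pow_left (hp.coprime_iff_not_dvd.2 hne)).dvd_of_dvd_mul_right
    ⟨b ^ 2 - t ^ 2, ?_⟩
  linear_combination t ^ 2 * hab - b ^ 2 * hst

lemma emod_four_eq_two_of_sq_add_sq {s t : ℤ} (hs : s % 4 = 1) (h : (s ^ 2 + t ^ 2) % 8 = 5) :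
    t % 4 = 2 := by
  obtain ⟨j, rfl⟩ : ∃ j, s = 4 * j + 1 := ⟨s / 4, by lia⟩
  obtain ⟨k, r, hr, rfl⟩ : ∃ k r, (r = 0 ∨ r = 1 ∨ r = 2 ∨ r = 3) ∧ t = 4 * k + r :=
    ⟨t / 4, t % 4, by lia, by lia⟩
  rcases hr with rfl | rfl | rfl | rfl <;> ring_nf at h <;> lia

variable {F : Type*} [Field F] {α : F} {χ : MulChar F ℤ[i]}

lemma ne_zero_of_apply_eq_sqrtd (hχ : χ α = 𝐢) : α ≠ 0 :=
  IsPrimitiveElt.ne_zero_of_isPrimitiveRoot four_ne_zero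
    (hχ ▸ gaussianInt_isPrimitiveRoot_sqrtd : IsPrimitiveRoot (χ α) 4)

variable [Fintype F]

lemma norm_jacobiSum_self (hχ : χ α = 𝐢) : (jacobiSum χ χ).norm = Fintype.card F := by
  have hα : IsUnit α := (ne_zero_of_apply_eq_sqrtd hχ).isUnit
  have hχ1 : χ ≠ 1 := by
    rintro rfl
    exact absurd ((MulChar.one_apply hα).symm.trans hχ) (by decide)
  refine norm_jacobiSum hχ1 hχ1 fun h ↦ ?_
  have h1 : 𝐢 * 𝐢 = 1 := by rw [← hχ, ← MulChar.mul_apply, h, MulChar.one_apply hα]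
  exact absurd h1 (by decide)

lemma re_add_im_mul_jacobiSum_self_eq (hα : IsPrimitiveElt α) (hχ : χ α = 𝐢) {n : ℕ} (hn : n ≠ 0)
    (hnF : n < Fintype.card F - 1) {r : F} (hr : r * r = -1) (hrα : r = α ^ n) :
    ((jacobiSum χ χ).re + (jacobiSum χ χ).im * r : F) =
      (-1) ^ (Fintype.card F - n) * n.choose (Fintype.card F - 1 - n) := by
  let φ : ℤ[i] →+* F := Zsqrtd.lift ⟨r, by simpa using hr⟩
  have hφχ := hα.map_mulChar_apply φ hn (χ := χ) (by simpa [φ, hχ] using hrα)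
  change φ (jacobiSum χ χ) = _
  rw [jacobiSum, map_sum, ← sum_pow_mul_one_sub_pow hnF.le hnF]
  simp_rw [map_mul, hφχ]

lemma jacobiSum_self_re_sub_im_mul_ne_zero {p m : ℕ} (hp : p.Prime) (hFp : Fintype.card F = p ^ m)
    (hp4 : p % 4 = 1) (hα : IsPrimitiveElt α) (hχ : χ α = 𝐢) :
    ((jacobiSum χ χ).re - (jacobiSum χ χ).im * α ^ ((Fintype.card F - 1) / 4) : F) ≠ 0 := by
  have hcard := Fintype.one_lt_card (α := F)
  have hF : Fintype.card F % 4 = 1 := by simp [hFp, Nat.pow_mod, hp4]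
  obtain ⟨f, hf⟩ : ∃ f, Fintype.card F = 4 * f + 1 := ⟨(Fintype.card F - 1) / 4, by lia⟩
  have hsq := hα.pow_card_sub_one_div_four_mul_self (ne_zero_of_apply_eq_sqrtd hχ) hF
  rw [show (Fintype.card F - 1) / 4 = f by lia] at hsq ⊢
  have hcube : -α ^ f = α ^ (3 * f) := by
    rw [show 3 * f = f + f + f by lia, pow_add, pow_add, hsq, neg_one_mul]
  have := Fact.mk hp
  have := charP_of_card_eq_prime_pow hFp
  rw [sub_eq_add_neg, ← mul_neg, re_add_im_mul_jacobiSum_self_eq hα hχ (by lia) (by lia)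
    (by rw [neg_mul_neg, hsq]) hcube, show Fintype.card F - 1 - 3 * f = f by lia]
  refine mul_ne_zero (pow_ne_zero _ (neg_ne_zero.2 one_ne_zero)) ?_
  rw [Ne, CharP.cast_eq_zero_iff F p]
  exact not_dvd_choose_three_mul hp hp4 (hFp ▸ hf)

lemma card_dvd_im_jacobiSum_self_mul {p m : ℕ} (hp : p.Prime) (hFp : Fintype.card F = p ^ m)
    (hp4 : p % 4 = 1) (hα : IsPrimitiveElt α) (hχ : χ α = 𝐢) {s t : ℤ}
    (hst : (Fintype.card F : ℤ) = s ^ 2 + t ^ 2) (hps : ¬ (p : ℤ) ∣ s)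
    (ht : (t : F) * α ^ ((Fintype.card F - 1) / 4) = s) :
    (Fintype.card F : ℤ) ∣ (jacobiSum χ χ).re * t + (jacobiSum χ χ).im * s := by
  have := Fact.mk hp
  have := charP_of_card_eq_prime_pow hFp
  have hnorm := norm_jacobiSum_self hχ
  have hne := jacobiSum_self_re_sub_im_mul_ne_zero hp hFp hp4 hα hχ
  rw [Zsqrtd.norm_def] at hnorm
  rw [hFp, Nat.cast_pow] at hnorm hst ⊢
  refine pow_dvd_mul_add_mul_of_sq_add_sq (Nat.prime_iff_prime_int.1 hp)
    (by linear_combination -hnorm) hst ?_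
  have ht0 : (t : F) ≠ 0 := by
    intro h0
    rw [h0, zero_mul, eq_comm, CharP.intCast_eq_zero_iff F p] at ht
    exact hps ht
  rw [← CharP.intCast_eq_zero_iff F p]
  refine fun h ↦ mul_ne_zero ht0 hne ?_
  push_cast at h
  linear_combination -(jacobiSum χ χ).im * ht - h

lemma two_mul_one_add_sqrtd_dvd_jacobiSum_self_sub_one (hF : Fintype.card F % 8 = 5)
    (hα : IsPrimitiveElt α) (hχ : χ α = 𝐢) : 2 * (1 + 𝐢) ∣ jacobiSum χ χ - 1 := by
  have h2 : ¬ IsSquare (2 : F) := by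
    rw [FiniteField.isSquare_two_iff]
    lia
  have hhalf : χ 2⁻¹ ^ 2 = -1 :=
    hα.apply_sq_eq_neg_one (hχ ▸ gaussianInt_isPrimitiveRoot_sqrtd) (by simpa using h2)
  obtain ⟨k, hk⟩ : ∃ k, Fintype.card F = 4 * k + 5 := ⟨Fintype.card F / 4 - 1, by lia⟩
  have h := two_mul_one_add_sqrtd_dvd_jacobiSum_self_sub χ (by rintro h0; simp [h0] at h2)
  have h4 : 2 * (1 + 𝐢) ∣ 4 * k := Dvd.dvd.mul_right ⟨1 - 𝐢, by decide⟩ _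
  convert dvd_add h h4 using 1
  rw [hhalf, hk]
  push_cast
  ring

theorem jacobiSum_self_eq {p m : ℕ} (hp : p.Prime) (hFp : Fintype.card F = p ^ m)
    (hF : Fintype.card F % 8 = 5) (hα : IsPrimitiveElt α) (hχ : χ α = 𝐢) {s t : ℤ}
    (hst : (Fintype.card F : ℤ) = s ^ 2 + t ^ 2) (hps : ¬ (p : ℤ) ∣ s) (hs4 : s % 4 = 1)
    (ht : (t : F) * α ^ ((Fintype.card F - 1) / 4) = s) :
    jacobiSum χ χ = ⟨-s, t⟩ := by
  have hp4 : p % 4 = 1 := by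
    have := mod_eight_eq_five_of_pow (hFp ▸ hF)
    lia
  have hnorm : (⟨s, t⟩ : ℤ[i]).norm = Fintype.card F := by
    rw [hst, Zsqrtd.norm_def]
    ring
  have hne : (⟨s, t⟩ : ℤ[i]) ≠ 0 := by
    rintro h
    rw [h, Zsqrtd.norm_zero] at hnorm
    exact Fintype.card_ne_zero (by exact_mod_cast hnorm.symm)
  obtain ⟨u, hu, hJ⟩ := gaussianInt_exists_isUnit_eq_mul_star (w := ⟨s, t⟩) hne
    ((norm_jacobiSum_self hχ).trans hnorm.symm) (by
      rw [hnorm]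
      simpa [Zsqrtd.im_mul] using card_dvd_im_jacobiSum_self_mul hp hFp hp4 hα hχ hst hps ht)
  have ht4 : t % 4 = 2 := emod_four_eq_two_of_sq_add_sq hs4 (by rw [← hst]; exact_mod_cast hF)
  have hu1 : u = -1 := gaussianInt_isUnit_eq_neg_one hu hs4 ht4 <|
    hJ ▸ two_mul_one_add_sqrtd_dvd_jacobiSum_self_sub_one hF hα hχ
  rw [hJ, hu1]
  ext <;> simp

end QuarticJacobiSum

section Autocorrelation

lemma sum_mulChar_mul_mulChar_add {F R : Type*} [Field F] [Fintype F] [CommRing R]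
    (χ φ : MulChar F R) {z : F} (hz : z ≠ 0) :
    ∑ y, χ y * φ (y + z) = χ (-1) * (χ z * φ z) * jacobiSum χ φ := by
  rw [← Equiv.sum_comp (Equiv.mulLeft₀ (-z) (neg_ne_zero.2 hz)), jacobiSum, mul_sum]
  refine sum_congr rfl fun y _ ↦ ?_
  have hy : Equiv.mulLeft₀ (-z) (neg_ne_zero.2 hz) y = -1 * z * y := by simp
  rw [hy, show -1 * z * y + z = z * (1 - y) by ring]
  simp only [map_mul]
  ring

variable {F : Type*} [Field F] {χ : MulChar F ℤ[i]}

/-- The sign attached to a quartic character `χ`: it is `1` where `χ` takes the values `1` and `i`,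
`-1` where `χ` takes the values `-1` and `-i`, and `0` at `0`. -/
def quarticSign (χ : MulChar F ℤ[i]) (x : F) : ℤ := (χ x).re + (χ x).im

lemma quarticSign_neg (hχ : χ (-1) = -1) (x : F) : quarticSign χ (-x) = -quarticSign χ x := by
  rw [quarticSign, quarticSign, ← neg_one_mul x, map_mul, hχ, neg_one_mul, Zsqrtd.re_neg,
    Zsqrtd.im_neg, neg_add]

lemma two_mul_ite_eq_quarticSign [DecidableEq F] (χ : MulChar F ℤ[i]) (x : F) :
    (2 * if χ x = 1 ∨ χ x = 𝐢 then 1 else 0) =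
      1 + quarticSign χ x - if x = 0 then 1 else 0 := by
  rcases eq_or_ne x 0 with rfl | hx
  · rw [quarticSign, χ.map_zero, if_pos rfl]
    decide
  · rw [quarticSign, if_neg hx]
    rcases gaussianInt_isUnit_iff.1 (hx.isUnit.map χ) with h | h | h | h <;> rw [h] <;> decide

lemma ne_one_of_apply_neg_one (hχ : χ (-1) = -1) : χ ≠ 1 := by
  rintro rfl
  rw [MulChar.one_apply isUnit_one.neg] at hχ
  exact absurd hχ (by decide)

variable [Fintype F]

lemma sum_quarticSign (hχ : χ ≠ 1) : ∑ x, quarticSign χ x = 0 := by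
  simp only [quarticSign, sum_add_distrib, ← gaussianInt_re_sum, ← gaussianInt_im_sum,
    MulChar.sum_eq_zero_of_ne_one hχ, Zsqrtd.re_zero, Zsqrtd.im_zero, add_zero]

lemma sum_quarticSign_mul_quarticSign_add (hχ : χ (-1) = -1) {z : F} (hz : z ≠ 0) :
    ∑ y, quarticSign χ y * quarticSign χ (y + z) = -(χ z ^ 2 * jacobiSum χ χ).im - 1 := by
  have hmul (y : F) : quarticSign χ y * quarticSign χ (y + z) =
      (χ y * χ (y + z)).im + (χ y * χ⁻¹ (y + z)).re := by
    simp only [quarticSign, mulChar_inv_apply_eq_star, Zsqrtd.im_mul, Zsqrtd.re_mul,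
      Zsqrtd.re_star, Zsqrtd.im_star]
    ring
  have hz1 : χ z * χ⁻¹ z = 1 := by
    rw [← MulChar.mul_apply, mul_inv_cancel, MulChar.one_apply hz.isUnit]
  simp_rw [hmul, sum_add_distrib, ← gaussianInt_re_sum, ← gaussianInt_im_sum,
    sum_mulChar_mul_mulChar_add _ _ hz, hz1, hχ,
    jacobiSum_nontrivial_inv (ne_one_of_apply_neg_one hχ), hχ, ← sq, neg_one_mul, neg_mul,
    Zsqrtd.im_neg]
  rfl

theorem four_mul_card_filter_add_mem [DecidableEq F] (hχ : χ (-1) = -1) {z : F} (hz : z ≠ 0)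
    {U : Finset F} (hU : ∀ x, x ∈ U ↔ χ x = 1 ∨ χ x = 𝐢) :
    (4 * #{y ∈ U | y + z ∈ U} : ℤ) = Fintype.card F - 3 - (χ z ^ 2 * jacobiSum χ χ).im := by
  have hshift : ∑ y, quarticSign χ (y + z) = 0 :=
    (Equiv.sum_comp (Equiv.addRight z) _).trans (sum_quarticSign (ne_one_of_apply_neg_one hχ))
  have hprod (y : F) : ((4 * if y ∈ U ∧ y + z ∈ U then 1 else 0) : ℤ) =
      (1 + quarticSign χ y - if y = 0 then 1 else 0) *
        (1 + quarticSign χ (y + z) - if y = -z then 1 else 0) := by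
    simp_rw [eq_neg_iff_add_eq_zero, ← two_mul_ite_eq_quarticSign, ← hU, ite_and]
    split_ifs <;> rfl
  have hcard : (#{y ∈ U | y + z ∈ U} : ℤ) = ∑ y, if y ∈ U ∧ y + z ∈ U then 1 else 0 := by
    simp [← filter_filter]
  rw [hcard, mul_sum, sum_congr rfl fun y _ ↦ hprod y]
  simp only [add_mul, mul_add, sub_mul, mul_sub, sum_add_distrib, sum_sub_distrib, one_mul,
    mul_one, mul_ite, ite_mul, mul_zero, zero_mul, sum_ite_eq', sum_const, card_univ, mem_univ,
    if_true, nsmul_one, hshift, sum_quarticSign (ne_one_of_apply_neg_one hχ),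
    sum_quarticSign_mul_quarticSign_add hχ hz, quarticSign_neg hχ, zero_add, neg_eq_zero, hz,
    if_false]
  ring

end Autocorrelation

section PairFamily

variable {F : Type*} [Field F] [Fintype F] [DecidableEq F] {α : F} {R : Type*} [CommRing R]
  [IsDomain R] {χ : MulChar F R}

lemma mem_cycClass_two_zero_iff (hα : IsPrimitiveElt α) (hχ : IsPrimitiveRoot (χ α) 4) {x : F} :
    x ∈ cycClass α 2 0 ↔ χ x ^ 2 = 1 := by
  have hχ' : IsPrimitiveRoot ((χ ^ 2) α) 2 := by
    rw [MulChar.pow_apply' _ two_ne_zero]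
    exact hχ.pow (by lia) rfl
  rw [mem_cycClass_iff_mulChar_apply hα two_ne_zero hχ', pow_zero,
    MulChar.pow_apply' _ two_ne_zero]

lemma mem_cycClass_four_zero_iff (hα : IsPrimitiveElt α) (hχ : IsPrimitiveRoot (χ α) 4) {x : F} :
    x ∈ cycClass α 4 0 ↔ χ x = 1 := by
  rw [mem_cycClass_iff_mulChar_apply hα four_ne_zero hχ, pow_zero]

lemma cycClass_two_zero_subset_Gstar (hα : IsPrimitiveElt α) (hχ : IsPrimitiveRoot (χ α) 4) :
    cycClass α 2 0 ⊆ Gstar F := by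
  intro x hx
  rw [Gstar, mem_erase, and_iff_left (mem_univ x)]
  rintro rfl
  simp [mem_cycClass_two_zero_iff hα hχ, χ.map_zero] at hx

lemma ne_two_mul_of_mem_cycClass (hα : α ≠ 0) {x : F} (hx : x ∈ cycClass α 4 0) : x ≠ 2 * x := by
  obtain ⟨j, -, rfl⟩ := mem_image.1 hx
  rw [two_mul, ne_eq, left_eq_add]
  exact pow_ne_zero _ hα

lemma mem_biUnion_pairFam (hα : IsPrimitiveElt α) (hχ : IsPrimitiveRoot (χ α) 4) (h2 : χ 2 ≠ 0)
    {x : F} : x ∈ univ.biUnion (pairFam α) ↔ χ x = 1 ∨ χ x = χ 2 := by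
  have h2' : (2 : F) ≠ 0 := fun h ↦ h2 (by rw [h, χ.map_zero])
  simp only [mem_biUnion, mem_univ, true_and, pairFam, mem_insert, mem_singleton, exists_or,
    Subtype.exists, mem_cycClass_four_zero_iff hα hχ, exists_prop]
  refine or_congr (by simp) ⟨?_, fun h ↦ ⟨2⁻¹ * x, ?_, (mul_inv_cancel_left₀ h2' x).symm⟩⟩
  · rintro ⟨y, hy, rfl⟩
    rw [map_mul, hy, mul_one]
  · rw [← mul_right_inj' h2, ← map_mul, mul_inv_cancel_left₀ h2' x, h, mul_one]

lemma pairwise_disjoint_pairFam (hα : IsPrimitiveElt α) (hχ : IsPrimitiveRoot (χ α) 4)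
    (h2 : (2 : F) ≠ 0) (h2' : χ 2 ≠ 1) :
    Pairwise fun i j ↦ Disjoint (pairFam α i) (pairFam α j) := by
  have hne (i j : {x // x ∈ cycClass α 4 0}) : (i : F) ≠ 2 * j := by
    intro h
    have h' := congrArg χ h
    rw [map_mul, (mem_cycClass_four_zero_iff hα hχ).1 i.2,
      (mem_cycClass_four_zero_iff hα hχ).1 j.2, mul_one] at h'
    exact h2' h'.symm
  intro i j hij
  have hij' : (i : F) ≠ j := Subtype.coe_injective.ne hij
  rw [disjoint_iff_ne]
  simp only [pairFam, mem_insert, mem_singleton]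
  rintro _ (rfl | rfl) _ (rfl | rfl)
  · exact hij'
  · exact hne i j
  · exact (hne j i).symm
  · exact (mul_right_injective₀ h2).ne hij'

lemma sum_intDiff_pairFam (hα : IsPrimitiveElt α) (hχ : IsPrimitiveRoot (χ α) 4)
    (hF : Fintype.card F % 8 = 5) :
    ∑ i, intDiff (pairFam α i) = (cycClass α 2 0).val := by
  have hneg (x : F) : χ (-x) = -χ x := by
    rw [← neg_one_mul x, map_mul, hα.apply_neg_one_eq hχ hF, neg_one_mul]
  have hmem (x : F) : x ∈ (cycClass α 4 0).map (Equiv.neg F).toEmbedding ↔ χ x = -1 := by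
    rw [mem_map_equiv, Equiv.neg_symm, Equiv.neg_apply, mem_cycClass_four_zero_iff hα hχ, hneg,
      neg_eq_iff_eq_neg]
  have hdisj : Disjoint (cycClass α 4 0) ((cycClass α 4 0).map (Equiv.neg F).toEmbedding) := by
    rw [disjoint_left]
    intro x hx hx'
    rw [mem_cycClass_four_zero_iff hα hχ] at hx
    exact one_ne_neg_one_of_isPrimitiveRoot_four hχ (hx.symm.trans ((hmem x).1 hx'))
  have hunion : cycClass α 2 0 = (cycClass α 4 0).disjUnion _ hdisj := by
    ext x
    rw [mem_disjUnion, hmem, mem_cycClass_two_zero_iff hα hχ, mem_cycClass_four_zero_iff hα hχ,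
      sq_eq_one_iff]
  have hintDiff (x : {x // x ∈ cycClass α 4 0}) :
      intDiff (pairFam α x) = {(x : F)} + {-(x : F)} := by
    rw [pairFam, intDiff_pair
      (ne_two_mul_of_mem_cycClass (IsPrimitiveElt.ne_zero_of_isPrimitiveRoot four_ne_zero hχ) x.2),
      add_comm, two_mul, add_sub_cancel_right, sub_add_cancel_left]
  simp_rw [hintDiff, sum_add_distrib, hunion, disjUnion_val, map_val]
  rw [sum_coe_sort _ fun x ↦ ({x} : Multiset F), sum_coe_sort _ fun x ↦ ({-x} : Multiset F),
    sum_multiset_singleton]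
  congr 1
  exact Multiset.bind_singleton _ _

theorem isDPDF_pairFam (hα : IsPrimitiveElt α) (hχ : IsPrimitiveRoot (χ α) 4)
    (hF : Fintype.card F % 8 = 5) :
    IsDPDF (pairFam α) (Fintype.card F) ((Fintype.card F - 1) / 4) (fun _ ↦ 2) (cycClass α 2 0)
      1 0 := by
  have hα0 := IsPrimitiveElt.ne_zero_of_isPrimitiveRoot four_ne_zero hχ
  have h2 := hα.apply_two_sq hχ hF
  have h20 : (2 : F) ≠ 0 := by
    intro h
    simp [h, χ.map_zero] at h2
  have h21 : χ 2 ≠ 1 := by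
    intro h
    rw [h, one_pow] at h2
    exact one_ne_neg_one_of_isPrimitiveRoot_four hχ h2
  refine ⟨rfl, ?_, fun i ↦ ?_, fun i ↦ ?_, pairwise_disjoint_pairFam hα hχ h20 h21, ?_⟩
  · rw [Fintype.card_coe, card_cycClass hα hα0 (by lia)]
  · intro h
    have hi : (i : F) = 0 := by simpa [pairFam, h20, eq_comm] using h
    simpa [hi] using ne_two_mul_of_mem_cycClass hα0 i.2
  · exact card_pair (ne_two_mul_of_mem_cycClass hα0 i.2)
  · rw [sum_intDiff_pairFam hα hχ hF, one_nsmul, zero_nsmul, add_zero]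

lemma four_mul_count_sum_extDiff_pairFam {χ : MulChar F ℤ[i]} (hα : IsPrimitiveElt α)
    (hχ : IsPrimitiveRoot (χ α) 4) (hF : Fintype.card F % 8 = 5) (h2 : χ 2 = 𝐢)
    {z : F} (hz : z ≠ 0) :
    (4 * (∑ i, ∑ j ∈ univ.erase i, extDiff (pairFam α i) (pairFam α j)).count z : ℤ) =
      if z ∈ cycClass α 2 0 then Fintype.card F - 7 - (jacobiSum χ χ).im
      else Fintype.card F - 3 + (jacobiSum χ χ).im := by
  obtain ⟨-, -, -, -, hdisj, -⟩ := isDPDF_pairFam hα hχ hF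
  have hmem (x : F) : x ∈ univ.biUnion (pairFam α) ↔ χ x = 1 ∨ χ x = 𝐢 := by
    rw [mem_biUnion_pairFam hα hχ (by rw [h2]; decide), h2]
  have hcard := four_mul_card_filter_add_mem (hα.apply_neg_one_eq hχ hF) hz hmem
  rw [← count_intDiff _ hz, ← sum_extDiff_add_sum_intDiff hdisj, sum_intDiff_pairFam hα hχ hF,
    Multiset.count_add, Multiset.count_eq_of_nodup (cycClass α 2 0).nodup] at hcard
  simp only [mem_val] at hcard
  split_ifs at hcard ⊢ with hzT
  · rw [(mem_cycClass_two_zero_iff hα hχ).1 hzT, one_mul] at hcard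
    push_cast at hcard
    linarith
  · have hsq : χ z ^ 2 = -1 := (hα.apply_sq_eq_one_or_eq_neg_one hχ hz).resolve_left <|
      mt (mem_cycClass_two_zero_iff hα hχ).2 hzT
    rw [hsq, neg_one_mul, Zsqrtd.im_neg] at hcard
    push_cast at hcard
    linarith

theorem exists_isEPDF_pairFam {χ : MulChar F ℤ[i]} (hα : IsPrimitiveElt α)
    (hχ : IsPrimitiveRoot (χ α) 4) (hF : Fintype.card F % 8 = 5) (h2 : χ 2 = 𝐢) :
    ∃ lam mu : ℕ, (4 * lam : ℤ) = Fintype.card F - 7 - (jacobiSum χ χ).im ∧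
      (4 * mu : ℤ) = Fintype.card F - 3 + (jacobiSum χ χ).im ∧
      IsEPDF (pairFam α) (Fintype.card F) ((Fintype.card F - 1) / 4) (fun _ ↦ 2)
        (cycClass α 2 0) lam mu := by
  obtain ⟨hn, hm, h0, hk, hdisj, -⟩ := isDPDF_pairFam hα hχ hF
  have hcount {z : F} (hz : z ≠ 0) := four_mul_count_sum_extDiff_pairFam hα hχ hF h2 hz
  have h1T : (1 : F) ∈ cycClass α 2 0 := by
    rw [mem_cycClass_two_zero_iff hα hχ, map_one, one_pow]
  have h2T : (2 : F) ∉ cycClass α 2 0 := by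
    rw [mem_cycClass_two_zero_iff hα hχ, h2]
    decide
  have hlam := (hcount one_ne_zero).trans (if_pos h1T)
  have h20 : (2 : F) ≠ 0 := by
    intro h
    rw [h, χ.map_zero] at h2
    exact absurd h2 (by decide)
  have hmu := (hcount h20).trans (if_neg h2T)
  refine ⟨_, _, hlam, hmu, hn, hm, h0, hk, hdisj,
    eq_nsmul_val_add_nsmul_val ?_ (fun z hz ↦ ?_) fun z hz hzT ↦ ?_⟩
  · intro h
    refine zero_notMem_intDiff (univ.biUnion (pairFam α)) ?_
    rw [← sum_extDiff_add_sum_intDiff hdisj]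
    exact Multiset.mem_add.2 (.inl h)
  · have hz0 : z ≠ 0 := ne_of_mem_erase (cycClass_two_zero_subset_Gstar hα hχ hz)
    have := (hcount hz0).trans (if_pos hz)
    lia
  · have := (hcount hz).trans (if_neg hzT)
    lia

theorem isEDF_pairFam {χ : MulChar F ℤ[i]} (hα : IsPrimitiveElt α)
    (hχ : IsPrimitiveRoot (χ α) 4) (hF : Fintype.card F % 8 = 5) (h2 : χ 2 = 𝐢)
    (hJ : (jacobiSum χ χ).im = -2) :
    IsEDF (pairFam α) (Fintype.card F) ((Fintype.card F - 1) / 4) (fun _ ↦ 2)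
      ((Fintype.card F - 5) / 4) := by
  obtain ⟨lam, mu, hlam, hmu, h⟩ := exists_isEPDF_pairFam hα hχ hF h2
  obtain rfl : lam = (Fintype.card F - 5) / 4 := by lia
  obtain rfl : mu = (Fintype.card F - 5) / 4 := by lia
  exact h.isEDF (cycClass_two_zero_subset_Gstar hα hχ)

theorem isEPDF_pairFam {χ : MulChar F ℤ[i]} (hα : IsPrimitiveElt α)
    (hχ : IsPrimitiveRoot (χ α) 4) (hF : Fintype.card F % 8 = 5) (h2 : χ 2 = 𝐢)
    (hJ : (jacobiSum χ χ).im = 2) :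
    ∃ lam : ℕ, 4 * (lam : ℤ) = Fintype.card F - 9 ∧
      IsEPDF (pairFam α) (Fintype.card F) ((Fintype.card F - 1) / 4) (fun _ ↦ 2)
        (cycClass α 2 0) lam ((Fintype.card F - 1) / 4) := by
  obtain ⟨lam, mu, hlam, hmu, h⟩ := exists_isEPDF_pairFam hα hχ hF h2
  obtain rfl : mu = (Fintype.card F - 1) / 4 := by lia
  exact ⟨lam, by lia, h⟩

end PairFamily

/-- For a prime power `q = p^m ≡ 5 (mod 8)` with Katre–Rajwade normalized
representation `q = s² + t²`, the family `D = {{i, 2i} : i ∈ C_0^4}` is: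
(i) if `2 ∈ C_1^4`: a `(q,(q-1)/4,2,(q-5)/4)`-EDF when `t = -2`, and a
`(q,(q-1)/4,2;(q-9)/4,(q-1)/4)`-EPDF relative to `C_0^2` when `t = 2`;
(ii) if `2 ∈ C_3^4`: a `(q,(q-1)/4,2,(q-5)/4)`-EDF when `t = 2`, and a
`(q,(q-1)/4,2;(q-9)/4,(q-1)/4)`-EPDF relative to `C_0^2` when `t = -2`.
In all cases `D` is a `(q,(q-1)/4,2;1,0)`-DPDF relative to `C_0^2`. -/
theorem stmt_12 {F : Type*} [Field F] [Fintype F] [DecidableEq F]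
    (q p m : ℕ) (hp : p.Prime) (hq : Fintype.card F = q) (hqpm : q = p ^ m)
    (hq8 : q % 8 = 5)
    (α : F) (hα : IsPrimitiveElt α)
    (s t : ℤ) (hst : (q : ℤ) = s ^ 2 + t ^ 2)
    (hps : ¬((p : ℤ) ∣ s)) (hs4 : s % 4 = 1)
    (ht : (t : F) * α ^ ((q - 1) / 4) = (s : F)) :
    ((2 : F) ∈ cycClass α 4 1 →
      (t = -2 → IsEDF (pairFam α) q ((q - 1) / 4) (fun _ => 2) ((q - 5) / 4)) ∧
      (t = 2 → ∃ lam : ℕ, 4 * (lam : ℤ) = (q : ℤ) - 9 ∧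
        IsEPDF (pairFam α) q ((q - 1) / 4) (fun _ => 2) (cycClass α 2 0)
          lam ((q - 1) / 4))) ∧
    ((2 : F) ∈ cycClass α 4 3 →
      (t = 2 → IsEDF (pairFam α) q ((q - 1) / 4) (fun _ => 2) ((q - 5) / 4)) ∧
      (t = -2 → ∃ lam : ℕ, 4 * (lam : ℤ) = (q : ℤ) - 9 ∧
        IsEPDF (pairFam α) q ((q - 1) / 4) (fun _ => 2) (cycClass α 2 0)
          lam ((q - 1) / 4))) ∧
    IsDPDF (pairFam α) q ((q - 1) / 4) (fun _ => 2) (cycClass α 2 0) 1 0 := by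
  subst hq
  have hprim := gaussianInt_isPrimitiveRoot_sqrtd
  obtain ⟨χ, hχα⟩ := hα.exists_mulChar_apply_eq (hα.ne_zero (by lia)) (ζ := 𝐢) <|
    (hprim.pow_eq_one_iff_dvd _).2 (by lia)
  have hχ : IsPrimitiveRoot (χ α) 4 := hχα ▸ hprim
  have hχ' := isPrimitiveRoot_mulChar_inv_apply hχ
  have hJ : jacobiSum χ χ = ⟨-s, t⟩ := jacobiSum_self_eq hp hqpm hq8 hα hχα hst hps hs4 ht
  have hJ' : (jacobiSum χ⁻¹ χ⁻¹).im = -t := by rw [jacobiSum_inv_eq_star, hJ, Zsqrtd.im_star]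
  refine ⟨fun h2 ↦ ?_, fun h2 ↦ ?_, isDPDF_pairFam hα hχ hq8⟩
  all_goals rw [mem_cycClass_iff_mulChar_apply hα four_ne_zero hχ, hχα] at h2
  · rw [pow_one] at h2
    exact ⟨fun ht2 ↦ isEDF_pairFam hα hχ hq8 h2 (by rw [hJ, ht2]),
      fun ht2 ↦ isEPDF_pairFam hα hχ hq8 h2 (by rw [hJ, ht2])⟩
  · have h2' : χ⁻¹ 2 = 𝐢 := by
      rw [mulChar_inv_apply_eq_star, h2]
      decide
    exact ⟨fun ht2 ↦ isEDF_pairFam hα hχ' hq8 h2' (by rw [hJ', ht2]),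
      fun ht2 ↦ isEPDF_pairFam hα hχ' hq8 h2' (by rw [hJ', ht2, neg_neg])⟩
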